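/- arXiv:2507.06214 — 6 statements merged into one kernel-verified Lean document; each statement's English description precedes it below -/
import Mathlib

section
/- Let (G, ·, ∘) be a skew brace. Then: (i) for every a ∈ G, the map λ_a is an automorphism of the group (G, ·); (ii) the map Ψ : a ↦ (a, λ_a) is an injective group homomorphism from (G, ∘) into Aff(G, ·); (iii) the image H = { (a, λ_a) : a ∈ G } is a regular subgroup of Aff(G, ·). In particular, (G, ∘) is isomorphic as a group to the regular subgroup H. -/
/-- The affine group `Aff(G, ·) = G ⋊ Aut(G, ·)`, the semidirect product of `G` with its
automorphism group acting by evaluation; multiplication is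
`(a, f)(b, g) = (a · f(b), f ∘ g)`. -/
abbrev Aff (G : Type*) [Group G] : Type _ :=
  SemidirectProduct G (MulAut G) (MonoidHom.id (MulAut G))

/-- A subgroup `H ≤ Aff(G, ·)` is *regular* if for each `a ∈ G` there is a unique
`(x, f) ∈ H` with `x · f(a) = 1`. -/
def IsRegularSubgroup {G : Type*} [Group G] (H : Subgroup (Aff G)) : Prop :=
  ∀ a : G, ∃! h : Aff G, h ∈ H ∧ h.left * h.right a = 1

/-!
In a skew brace, `(G, ∘)` acts simply transitively on the set `G` by left translations
`b ↦ a ∘ b = a · λ_a(b)`. The compatibility identity says precisely that these translations are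
affine maps of `(G, ·)`. Any action by affine maps is a homomorphism to `Aff(G, ·)`; it is
injective when the action is faithful, and its image is regular when the action is simply
transitive.
-/

/-- An action of `C` on a group `G` is *affine* if every `c : C` acts as a left translation of `G`
composed with an endomorphism of `G`. The translation is then by `c • 1`, which leads to the
identity below, where no endomorphism has to be named. -/
class IsAffineAction (C G : Type*) [Group G] [SMul C G] : Prop where
  smul_mul (c : C) (x y : G) : c • (x * y) = c • x * (c • (1 : G))⁻¹ * c • y

namespace IsAffineAction

variable {C G : Type*} [Group C] [Group G] [MulAction C G] [IsAffineAction C G]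

variable (G) in
/-- The linear part `x ↦ (c • 1)⁻¹ * c • x` of the affine map by which `c` acts on `G`; for a skew
brace this is the map `λ_c`. -/
def linearPart (c : C) : MulAut G :=
  MulEquiv.mk' ((MulAction.toPerm c).trans (Equiv.mulLeft (c • (1 : G))⁻¹)) fun x y => by
    simp only [Equiv.trans_apply, MulAction.toPerm_apply, Equiv.coe_mulLeft, smul_mul, mul_assoc]

lemma smul_one_mul_linearPart (c : C) (x : G) : c • (1 : G) * linearPart G c x = c • x :=
  mul_inv_cancel_left _ _

lemma linearPart_mul (c d : C) : linearPart G (c * d) = linearPart G c * linearPart G d := by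
  ext x
  refine mul_left_cancel (a := (c * d) • (1 : G)) ?_
  calc (c * d) • (1 : G) * linearPart G (c * d) x
      = c • d • x := by rw [smul_one_mul_linearPart, mul_smul]
    _ = c • (1 : G) * linearPart G c (d • (1 : G) * linearPart G d x) := by
        rw [smul_one_mul_linearPart, smul_one_mul_linearPart]
    _ = (c * d) • (1 : G) * linearPart G c (linearPart G d x) := by
        rw [map_mul, ← mul_assoc, smul_one_mul_linearPart, mul_smul]

variable (C G) in
/-- The homomorphism to the affine group of `G` given by an affine action on `G`; for a skew brace
this is the map `Ψ`. -/
def toAff : C →* Aff G :=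
  MonoidHom.mk' (fun c => ⟨c • (1 : G), linearPart G c⟩) fun c d =>
    SemidirectProduct.ext ((mul_smul c d 1).trans (smul_one_mul_linearPart c (d • 1)).symm)
      (linearPart_mul c d)

lemma toAff_left_mul_right_apply (c : C) (x : G) :
    (toAff C G c).left * (toAff C G c).right x = c • x :=
  smul_one_mul_linearPart c x

lemma toAff_injective [FaithfulSMul C G] : Function.Injective (toAff C G) := fun c d h =>
  eq_of_smul_eq_smul fun x : G => by
    rw [← toAff_left_mul_right_apply, h, toAff_left_mul_right_apply]

lemma isRegularSubgroup_range_toAff [MulAction.IsPretransitive C G] [IsCancelSMul C G] :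
    IsRegularSubgroup (toAff C G).range := by
  intro x
  obtain ⟨c, hc⟩ := MulAction.exists_smul_eq C x 1
  refine ⟨toAff C G c, ⟨⟨c, rfl⟩, (toAff_left_mul_right_apply c x).trans hc⟩, ?_⟩
  rintro _ ⟨⟨d, rfl⟩, hd⟩
  rw [toAff_left_mul_right_apply] at hd
  rw [IsCancelSMul.right_cancel d c x (hd.trans hc.symm)]

end IsAffineAction

/-- The group `(G, ∘)` of a skew brace `(G, ·, ∘)`, as a synonym of `G` that carries the group
structure `Gc`, so that both group structures on `G` can be inferred. -/
def CircleGroup {G : Type*} (_Gc : Group G) : Type _ := G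

namespace CircleGroup

variable {G : Type*} (Gc : Group G)

instance : Group (CircleGroup Gc) := Gc

instance : MulAction (CircleGroup Gc) G :=
  inferInstanceAs (MulAction (CircleGroup Gc) (CircleGroup Gc))

instance : MulAction.IsPretransitive (CircleGroup Gc) G :=
  inferInstanceAs (MulAction.IsPretransitive (CircleGroup Gc) (CircleGroup Gc))

instance : IsCancelSMul (CircleGroup Gc) G :=
  inferInstanceAs (IsCancelSMul (CircleGroup Gc) (CircleGroup Gc))

instance : FaithfulSMul (CircleGroup Gc) G :=
  inferInstanceAs (FaithfulSMul (CircleGroup Gc) (CircleGroup Gc))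

end CircleGroup

/-- The compatibility identity of a skew brace `(G, ·, ∘)`, where `(G, ∘)` is the explicit argument
`Gc` and `(G, ·)` is the instance. -/
def IsSkewBrace {G : Type*} (Gc : Group G) [Group G] : Prop :=
  ∀ a b c : G, Gc.mul a (b * c) = Gc.mul a b * a⁻¹ * Gc.mul a c

namespace IsSkewBrace

variable {G : Type*} {Gc : Group G} [Group G]

lemma circle_one (hG : IsSkewBrace Gc) (a : G) : Gc.mul a 1 = a := by
  have h : Gc.mul a 1 = Gc.mul a 1 * (a⁻¹ * Gc.mul a 1) := by
    simpa only [mul_one, mul_assoc] using hG a 1 1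
  exact (inv_mul_eq_one.mp (left_eq_mul.mp h)).symm

lemma isAffineAction (hG : IsSkewBrace Gc) : IsAffineAction (CircleGroup Gc) G where
  smul_mul a b c := by
    rw [show a • (1 : G) = a from hG.circle_one a]
    exact hG a b c

end IsSkewBrace

/-- Let `(G, ·, ∘)` be a skew brace (`·` is the instance multiplication `*`,
`∘` is `Gc.mul`).  Then (i) for every `a`, the map `λ_a : b ↦ a⁻¹ · (a ∘ b)` is an
automorphism `Λ a` of `(G, ·)`; (ii) `Ψ : a ↦ (a, λ_a)` is an injective group homomorphism
from `(G, ∘)` into `Aff(G, ·)`; (iii) its image `H` is a regular subgroup of `Aff(G, ·)`.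
In particular `(G, ∘)` is isomorphic as a group to the regular subgroup `H`. -/
theorem skew_brace_lambda_regular_subgroup
    {G : Type*} (Gc : Group G) [Group G]
    (hcomp : ∀ a b c : G, Gc.mul a (b * c) = Gc.mul a b * a⁻¹ * Gc.mul a c) :
    ∃ Λ : G → MulAut G,
      (∀ a b : G, Λ a b = a⁻¹ * Gc.mul a b) ∧
      Function.Injective (fun a : G => (⟨a, Λ a⟩ : Aff G)) ∧
      (∀ a b : G, (⟨Gc.mul a b, Λ (Gc.mul a b)⟩ : Aff G) =
        (⟨a, Λ a⟩ : Aff G) * (⟨b, Λ b⟩ : Aff G)) ∧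
      ∃ H : Subgroup (Aff G),
        (H : Set (Aff G)) = Set.range (fun a : G => (⟨a, Λ a⟩ : Aff G)) ∧
        IsRegularSubgroup H ∧
        ∃ ψ : G → H, Function.Bijective ψ ∧
          ∀ a b : G, (ψ (Gc.mul a b) : Aff G) = ((ψ a : Aff G)) * ((ψ b : Aff G)) := by
  have hG : IsSkewBrace Gc := hcomp
  have := hG.isAffineAction
  let Λ (a : CircleGroup Gc) : MulAut G := IsAffineAction.linearPart G a
  let Ψ : CircleGroup Gc →* Aff G := IsAffineAction.toAff (CircleGroup Gc) G
  have coe_Ψ : ⇑Ψ = fun a : G => (⟨a, Λ a⟩ : Aff G) :=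
    funext fun a => SemidirectProduct.ext (hG.circle_one a) rfl
  have Ψ_injective : Function.Injective Ψ := IsAffineAction.toAff_injective
  have Λ_apply (a b : G) : Λ a b = a⁻¹ * Gc.mul a b :=
    congrArg (fun x : G => x⁻¹ * Gc.mul a b) (hG.circle_one a)
  have Ψ_mul (a b : CircleGroup Gc) : Ψ (a * b) = Ψ a * Ψ b := map_mul Ψ a b
  exact ⟨Λ, Λ_apply, coe_Ψ ▸ Ψ_injective, by rwa [coe_Ψ] at Ψ_mul, Ψ.range,
    coe_Ψ ▸ Ψ.coe_range, IsAffineAction.isRegularSubgroup_range_toAff,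
    MonoidHom.ofInjective Ψ_injective, (MonoidHom.ofInjective Ψ_injective).bijective, Ψ_mul⟩
end

section
/- Let (G, ·) be a group and let H be a regular subgroup of Aff(G, ·). For each a ∈ G let (a, f_a) denote the unique element of H whose first coordinate is a (such an element exists and is unique because the first-coordinate projection restricted to H is a bijection onto G), and define a ∘ b := a · f_a(b). Then ∘ is a group operation on G, the triple (G, ·, ∘) is a skew brace, and the map a ↦ (a, f_a) is a group isomorphism from (G, ∘) onto H. -/
/-! The first projection identifies a subgroup `H` that is the graph of a function `f : N → K` with
the set `N`. Transporting the multiplication of `H` along this bijection yields exactly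
`a ∘ b = a · φ (f a) b`, so the group axioms come for free; the brace identity only uses that each
`φ (f a)` is multiplicative. -/

section

variable {N K : Type*} [Group N] [Group K] {φ : K →* MulAut N}

/-- The operation `a ∘ b = a · φ (f a) b` on `N` induced by a function `f : N → K`. For
`K = MulAut N` and `φ = id` this is the second operation of the skew brace. -/
def circ (φ : K →* MulAut N) (f : N → K) (a b : N) : N :=
  a * φ (f a) b

theorem circ_mul (f : N → K) (a b c : N) :
    circ φ f a (b * c) = circ φ f a b * a⁻¹ * circ φ f a c := by
  simp only [circ, map_mul, mul_assoc, inv_mul_cancel_left]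

theorem semidirectProduct_mk_injective (f : N → K) :
    Function.Injective (fun a : N => (⟨a, f a⟩ : N ⋊[φ] K)) :=
  fun _ _ h => congrArg SemidirectProduct.left h

/-- The subgroup `H` of `N ⋊[φ] K` is, as a set of pairs, the graph of `f : N → K`. Equivalently,
`⟨a, f a⟩` is the unique element of `H` with first coordinate `a`. -/
structure IsGraphOf (H : Subgroup (N ⋊[φ] K)) (f : N → K) : Prop where
  mk_mem : ∀ a : N, (⟨a, f a⟩ : N ⋊[φ] K) ∈ H
  eq_mk : ∀ h ∈ H, h = ⟨h.left, f h.left⟩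

namespace IsGraphOf

variable {H : Subgroup (N ⋊[φ] K)} {f : N → K}

/-- The bijection `a ↦ ⟨a, f a⟩` from `N` onto the graph `H`, with inverse the first projection. -/
def equiv (hH : IsGraphOf H f) : N ≃ H where
  toFun a := ⟨⟨a, f a⟩, hH.mk_mem a⟩
  invFun h := h.1.left
  left_inv _ := rfl
  right_inv h := Subtype.ext (hH.eq_mk h h.2).symm

/-- The group structure on `N` transported from the graph `H`; its multiplication is `circ φ f`. -/
abbrev circGroup (hH : IsGraphOf H f) : Group N :=
  hH.equiv.group

theorem circGroup_mul (hH : IsGraphOf H f) : hH.circGroup.mul = circ φ f :=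
  rfl

theorem range_mk (hH : IsGraphOf H f) :
    Set.range (fun a : N => (⟨a, f a⟩ : N ⋊[φ] K)) = H :=
  (hH.equiv.surjective.range_comp Subtype.val).trans Subtype.range_coe

theorem mk_circ (hH : IsGraphOf H f) (a b : N) :
    (⟨circ φ f a b, f (circ φ f a b)⟩ : N ⋊[φ] K) = ⟨a, f a⟩ * ⟨b, f b⟩ :=
  (hH.eq_mk _ (H.mul_mem (hH.mk_mem a) (hH.mk_mem b))).symm

end IsGraphOf

theorem regular_subgroup_gives_skew_brace_general {H : Subgroup (N ⋊[φ] K)} {f : N → K}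
    (hH : IsGraphOf H f) :
    ∃ op : N → N → N,
      (∃ Gc : Group N, Gc.mul = op) ∧
      (∀ a b : N, op a b = a * φ (f a) b) ∧
      (∀ a b c : N, op a (b * c) = op a b * a⁻¹ * op a c) ∧
      Function.Injective (fun a : N => (⟨a, f a⟩ : N ⋊[φ] K)) ∧
      Set.range (fun a : N => (⟨a, f a⟩ : N ⋊[φ] K)) = (H : Set (N ⋊[φ] K)) ∧
      ∀ a b : N, (⟨op a b, f (op a b)⟩ : N ⋊[φ] K) =
        (⟨a, f a⟩ : N ⋊[φ] K) * (⟨b, f b⟩ : N ⋊[φ] K) :=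
  ⟨circ φ f, ⟨hH.circGroup, hH.circGroup_mul⟩, fun _ _ => rfl, circ_mul f,
    semidirectProduct_mk_injective f, hH.range_mk, hH.mk_circ⟩

end

/-- Let `H` be a regular subgroup of `Aff(G, ·)` and, for each `a ∈ G`, let
`(a, f a)` be the unique element of `H` with first coordinate `a`.  Define
`a ∘ b := a · (f a)(b)` (the operation `circ`).  Then `∘` is a group operation on `G`, the
triple `(G, ·, ∘)` is a skew brace, and `a ↦ (a, f a)` is a group isomorphism from `(G, ∘)`
onto `H`. -/
theorem regular_subgroup_gives_skew_brace
    {G : Type*} [Group G] (H : Subgroup (Aff G)) (hreg : IsRegularSubgroup H)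
    (f : G → MulAut G)
    (hf : ∀ a : G, (⟨a, f a⟩ : Aff G) ∈ H)
    (huniq : ∀ h ∈ H, h = ⟨h.left, f h.left⟩) :
    ∃ circ : G → G → G,
      (∃ Gc : Group G, Gc.mul = circ) ∧
      (∀ a b : G, circ a b = a * f a b) ∧
      (∀ a b c : G, circ a (b * c) = circ a b * a⁻¹ * circ a c) ∧
      Function.Injective (fun a : G => (⟨a, f a⟩ : Aff G)) ∧
      Set.range (fun a : G => (⟨a, f a⟩ : Aff G)) = (H : Set (Aff G)) ∧
      ∀ a b : G, (⟨circ a b, f (circ a b)⟩ : Aff G) =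
        (⟨a, f a⟩ : Aff G) * (⟨b, f b⟩ : Aff G) := by
  exact regular_subgroup_gives_skew_brace_general ⟨hf, huniq⟩
end

section
/- Let π : G̃ → G be a covering map with G̃ a connected topological space. Suppose G̃ carries two group operations · and ∘ with a common identity element ẽ, each making G̃ a topological group, suppose G carries two group operations · and ∘ making (G, ·, ∘) a skew brace, and suppose π is a group homomorphism both from (G̃, ·) to (G, ·) and from (G̃, ∘) to (G, ∘). Then the skew brace compatibility identity holds on G̃, i.e. (G̃, ·, ∘) is a skew brace. -/
/-!
For fixed `a` write `λₐ b = a⁻¹ · (a ∘ b)`. The compatibility identity says exactly that every `λₐ`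
is an endomorphism of `(G, ·)`. On the cover, `λₐ` is a continuous lift of the endomorphism
`λ_{π a}` of the base and fixes the identity. For fixed `b`, the maps `c ↦ λₐ (b · c)` and
`c ↦ λₐ b · λₐ c` are then lifts of the same map that agree at the identity, so they coincide by
uniqueness of lifts.
-/

section LiftOfHom

variable {H A B F : Type*} [TopologicalSpace H] [TopologicalSpace A] [PreconnectedSpace H]
  [MulOneClass H] [MulOneClass A] [Mul B] [FunLike F A B] [MulHomClass F A B]

theorem map_mul_of_comp_map_mul {π : F} (hsep : IsSeparatedMap π)
    (hinj : IsLocallyInjective π) (hH : ∀ x : H, Continuous (x * ·))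
    (hA : ∀ x : A, Continuous (x * ·)) {f : H → A} (hf : Continuous f) (hf_one : f 1 = 1)
    (hπf : ∀ x y, π (f (x * y)) = π (f x) * π (f y)) (x y : H) :
    f (x * y) = f x * f y := by
  have lifts_eq : (fun z => f (x * z)) = fun z => f x * f z := by
    refine hsep.eq_of_comp_eq hinj (hf.comp (hH x)) ((hA (f x)).comp hf) ?_ 1 ?_
    · funext z
      simp only [Function.comp_apply, hπf, map_mul]
    · simp only [hf_one, mul_one]
  exact congrFun lifts_eq y

end LiftOfHom

section SkewBrace

variable {G : Type*} [Group G]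

/-- The compatibility identity of a skew brace, relating the group operation of `G` to a second
operation `circ`. Nothing is assumed of `circ`, so a skew brace is a pair of group structures on `G`
such that the multiplication of the second satisfies this predicate. -/
def SkewBraceCompatible (circ : G → G → G) : Prop :=
  ∀ a b c, circ a (b * c) = circ a b * a⁻¹ * circ a c

/-- The lambda map `λₐ b = a⁻¹ · (a ∘ b)` of a skew brace, for an arbitrary operation `circ` in
place of `∘`. -/
def lambdaMap (circ : G → G → G) (a b : G) : G :=
  a⁻¹ * circ a b

theorem skewBraceCompatible_iff_lambdaMap_mul {circ : G → G → G} :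
    SkewBraceCompatible circ ↔
      ∀ a b c, lambdaMap circ a (b * c) = lambdaMap circ a b * lambdaMap circ a c := by
  simp only [SkewBraceCompatible, lambdaMap, mul_assoc, mul_right_inj]

theorem lambdaMap_one {circ : G → G → G} {a : G} (ha : circ a 1 = a) : lambdaMap circ a 1 = 1 := by
  rw [lambdaMap, ha, inv_mul_cancel]

theorem continuous_lambdaMap [TopologicalSpace G] (hmul : ∀ x : G, Continuous (x * ·))
    {circ : G → G → G} {a : G} (hcirc : Continuous (circ a)) : Continuous (lambdaMap circ a) :=
  (hmul a⁻¹).comp hcirc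

theorem map_lambdaMap {G' : Type*} [Group G'] (π : G →* G') {circ : G → G → G}
    {circ' : G' → G' → G'} (hπ : ∀ x y, π (circ x y) = circ' (π x) (π y)) (a b : G) :
    π (lambdaMap circ a b) = lambdaMap circ' (π a) (π b) := by
  simp only [lambdaMap, map_mul, map_inv, hπ]

end SkewBrace

theorem skew_brace_lifts_to_cover_general {A B : Type*} [TopologicalSpace A] [PreconnectedSpace A]
    [Group A] [Group B] {π : A →* B} (hsep : IsSeparatedMap π) (hinj : IsLocallyInjective π)
    {circA : A → A → A} {circB : B → B → B} (hmul : ∀ a : A, Continuous (a * ·))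
    (hcirc : ∀ a, Continuous (circA a)) (hcirc_one : ∀ a, circA a 1 = a)
    (hπ : ∀ x y, π (circA x y) = circB (π x) (π y)) (hB : SkewBraceCompatible circB) :
    SkewBraceCompatible circA := by
  rw [skewBraceCompatible_iff_lambdaMap_mul] at hB ⊢
  intro a
  refine map_mul_of_comp_map_mul hsep hinj hmul hmul
    (continuous_lambdaMap hmul (hcirc a)) (lambdaMap_one (hcirc_one a)) fun b c => ?_
  simp only [map_lambdaMap π hπ, map_mul, hB]

/-- Let `π : G̃ → G` be a covering map with `G̃` connected.  Suppose `G̃`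
carries two topological group structures `Gd'` (`·`) and `Gc'` (`∘`) with a common identity,
`G` carries a skew brace structure `(Gd, Gc)`, and `π` is a homomorphism for both operations.
Then the skew brace compatibility identity holds on `G̃`, i.e. `(G̃, ·, ∘)` is a skew brace. -/
theorem skew_brace_lifts_to_cover
    {A B : Type*} [TopologicalSpace A] [TopologicalSpace B]
    (π : A → B) (hcov : IsCoveringMap π) (hconn : ConnectedSpace A)
    (Gd' Gc' : Group A)
    (hmuld' : Continuous fun p : A × A => Gd'.mul p.1 p.2)
    (hinvd' : Continuous fun a : A => Gd'.inv a)
    (hmulc' : Continuous fun p : A × A => Gc'.mul p.1 p.2)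
    (hinvc' : Continuous fun a : A => Gc'.inv a)
    (hone : Gd'.one = Gc'.one)
    (Gd Gc : Group B)
    (hcompB : ∀ a b c : B, Gc.mul a (Gd.mul b c) =
      Gd.mul (Gd.mul (Gc.mul a b) (Gd.inv a)) (Gc.mul a c))
    (hπd : ∀ x y : A, π (Gd'.mul x y) = Gd.mul (π x) (π y))
    (hπc : ∀ x y : A, π (Gc'.mul x y) = Gc.mul (π x) (π y)) :
    ∀ a b c : A, Gc'.mul a (Gd'.mul b c) =
      Gd'.mul (Gd'.mul (Gc'.mul a b) (Gd'.inv a)) (Gc'.mul a c) := by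
  -- Without these, instance search would pick the later binders `Gc'` and `Gc`.
  let _ := Gd'
  let _ := Gd
  have hcirc_one : ∀ a, Gc'.mul a Gd'.one = a := hone ▸ Gc'.mul_one
  exact skew_brace_lifts_to_cover_general (π := MonoidHom.mk' π hπd) hcov.isSeparatedMap
    hcov.isLocalHomeomorph.isLocallyInjective (fun a => hmuld'.comp (.prodMk_right a))
    (fun a => hmulc'.comp (.prodMk_right a)) hcirc_one hπc hcompB
end

section
/- Let (G, ·) be a group with subgroups G₁ and G₂ such that every element a ∈ G can be written uniquely as a = a₁ · a₂ with a₁ ∈ G₁ and a₂ ∈ G₂. Define a ∘ b := a₁ · b · a₂, where a = a₁ · a₂ is the unique such factorization of a. Then ∘ is a group operation on G, the triple (G, ·, ∘) is a skew brace, and the map Φ : G₁ × G₂ → G, (a₁, a₂) ↦ a₁ · a₂⁻¹, is a group isomorphism from the direct product group G₁ × G₂ onto (G, ∘). -/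
/-!
If every `a : G` factors uniquely as `a₁ * a₂` with `a₁ ∈ H` and `a₂ ∈ K`, then
`(a₁, a₂) ↦ a₁ * a₂⁻¹` is a bijection `H × K ≃ G`. Transporting the product group structure along
it gives `a ∘ b = a₁ * (b₁ * b₂) * a₂ = a₁ * b * a₂`: the inversion on `K` is what turns the product
`a₂ * b₂` into `b₂ * a₂`. So the group axioms for `∘` need no verification, and the skew brace
identity is the cancellation of `a₂ * (a₁ * a₂)⁻¹ * a₁`.
-/

section ExactFactorization

open Subgroup (IsComplement)

variable {G : Type*} [Group G]

/-- The operation `a ∘ b = a₁ * b * a₂`, where `a = a₁ * a₂` is the factorization of `a` given by a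
pair of complementary subsets. -/
noncomputable def factorCirc {S T : Set G} (h : IsComplement S T) (a b : G) : G :=
  (h.equiv a).1 * b * (h.equiv a).2

theorem factorCirc_mul_right {S T : Set G} (h : IsComplement S T) (a b c : G) :
    factorCirc h a (b * c) = factorCirc h a b * a⁻¹ * factorCirc h a c := by
  have inv_eq : a⁻¹ = ((h.equiv a).2 : G)⁻¹ * ((h.equiv a).1 : G)⁻¹ := by
    rw [← mul_inv_rev, h.equiv_fst_mul_equiv_snd]
  simp only [factorCirc, inv_eq]
  group

theorem factorCirc_coe_mul_coe {S T : Set G} (h : IsComplement S T) (s : S) (t : T) (b : G) :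
    factorCirc h (s * t) b = s * b * t := by
  have equiv_eq : h.equiv (s * t) = (s, t) := h.equiv.apply_symm_apply (s, t)
  rw [factorCirc, equiv_eq]

variable {H K : Subgroup G}

/-- The bijection `(x, y) ↦ x * y⁻¹` from the product of two complementary subgroups onto the
group; `factorCirc` is the product group structure transported along it. -/
noncomputable def prodEquivMulInv (h : IsComplement (H : Set G) (K : Set G)) : H × K ≃ G :=
  ((Equiv.refl H).prodCongr (Equiv.inv K)).trans h.equiv.symm

theorem prodEquivMulInv_apply (h : IsComplement (H : Set G) (K : Set G)) (p : H × K) :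
    prodEquivMulInv h p = (p.1 : G) * (p.2 : G)⁻¹ :=
  rfl

theorem prodEquivMulInv_mul (h : IsComplement (H : Set G) (K : Set G)) (p q : H × K) :
    prodEquivMulInv h (p * q) = factorCirc h (prodEquivMulInv h p) (prodEquivMulInv h q) := by
  calc prodEquivMulInv h (p * q)
      = p.1 * prodEquivMulInv h q * (p.2⁻¹ : K) := by
        simp [prodEquivMulInv_apply, mul_assoc]
    _ = factorCirc h (prodEquivMulInv h p) (prodEquivMulInv h q) :=
        (factorCirc_coe_mul_coe h p.1 p.2⁻¹ _).symm

/-- The group structure on `G` with multiplication `factorCirc`, for complementary subgroups. It is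
obtained by transport from `H × K`, so its multiplication equals `factorCirc` only
propositionally. -/
noncomputable abbrev factorCircGroup (h : IsComplement (H : Set G) (K : Set G)) : Group G :=
  (prodEquivMulInv h).symm.group

theorem factorCircGroup_mul (h : IsComplement (H : Set G) (K : Set G)) :
    (factorCircGroup h).mul = factorCirc h := by
  funext a b
  let e := prodEquivMulInv h
  calc e (e.symm a * e.symm b)
      = factorCirc h (e (e.symm a)) (e (e.symm b)) := prodEquivMulInv_mul h _ _
    _ = factorCirc h a b := by simp only [Equiv.apply_symm_apply]

end ExactFactorization

/-- Let `(G, ·)` be a group with subgroups `G₁`, `G₂` such that every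
`a ∈ G` factors uniquely as `a = a₁ · a₂` with `a₁ ∈ G₁`, `a₂ ∈ G₂` (the factors being
`f₁ a` and `f₂ a`).  Define `a ∘ b := a₁ · b · a₂` (the operation `circ`).  Then `∘` is a
group operation on `G`, `(G, ·, ∘)` is a skew brace, and
`Φ : G₁ × G₂ → G, (a₁, a₂) ↦ a₁ · a₂⁻¹` is a group isomorphism from the direct product
`G₁ × G₂` onto `(G, ∘)`. -/
theorem exact_factorization_skew_brace
    {G : Type*} [Group G] (G₁ G₂ : Subgroup G)
    (f₁ : G → G₁) (f₂ : G → G₂)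
    (hf : ∀ a : G, (f₁ a : G) * (f₂ a : G) = a)
    (huniq : ∀ (a : G) (b₁ : G₁) (b₂ : G₂), (b₁ : G) * (b₂ : G) = a → b₁ = f₁ a ∧ b₂ = f₂ a) :
    ∃ circ : G → G → G,
      (∃ Gc : Group G, Gc.mul = circ) ∧
      (∀ a b : G, circ a b = (f₁ a : G) * b * (f₂ a : G)) ∧
      (∀ a b c : G, circ a (b * c) = circ a b * a⁻¹ * circ a c) ∧
      Function.Bijective (fun p : G₁ × G₂ => (p.1 : G) * (p.2 : G)⁻¹) ∧
      (∀ p q : G₁ × G₂, ((p * q).1 : G) * (((p * q).2 : G))⁻¹ =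
        circ ((p.1 : G) * ((p.2 : G))⁻¹) ((q.1 : G) * ((q.2 : G))⁻¹)) := by
  have h : Subgroup.IsComplement (G₁ : Set G) (G₂ : Set G) :=
    Subgroup.isComplement_iff_existsUnique.mpr fun a =>
      ⟨(f₁ a, f₂ a), hf a, fun p hp => Prod.ext (huniq a p.1 p.2 hp).1 (huniq a p.1 p.2 hp).2⟩
  have circ_eq (a b : G) : factorCirc h a b = f₁ a * b * f₂ a := by
    conv_lhs => rw [← hf a]
    exact factorCirc_coe_mul_coe h (f₁ a) (f₂ a) b
  exact ⟨factorCirc h, ⟨factorCircGroup h, factorCircGroup_mul h⟩, circ_eq, factorCirc_mul_right h,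
    (prodEquivMulInv h).bijective, prodEquivMulInv_mul h⟩
end

section
/- Let SL₂(ℝ) denote the group of 2×2 real matrices of determinant 1 under matrix multiplication ·. There exists a group operation ∘ on SL₂(ℝ) such that the triple (SL₂(ℝ), ·, ∘) is a skew brace and the group (SL₂(ℝ), ∘) is solvable; moreover ∘ can be chosen to be continuous (it is induced, via the exact Iwasawa factorization SL₂(ℝ) = K·AN with K = SO(2) and AN the subgroup of upper triangular matrices of determinant 1 with positive diagonal, by the rule a ∘ b = a₁ · b · a₂ where a = a₁a₂, a₁ ∈ K, a₂ ∈ AN). -/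
open Matrix

/-- The subspace topology on `SL₂(ℝ)`, induced from the space of `2 × 2` real matrices. -/
noncomputable instance : TopologicalSpace (Matrix.SpecialLinearGroup (Fin 2) ℝ) :=
  TopologicalSpace.induced (fun A => (A : Matrix (Fin 2) (Fin 2) ℝ)) inferInstance

/-!
An exact factorization `G = H · K` identifies `G` with `H × K` through `x * y⁻¹ ↔ (x, y)`.
Transporting the product group structure gives `a ∘ b = a₁ * b * a₂`, so `(G, ∘)` is solvable as
soon as `H` and `K` are. For `SL₂(ℝ)` the two factors are the abelian group `SO(2)` and a subgroup
of the upper triangular matrices, which are solvable because the diagonal is multiplicative with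
abelian kernel. The rotation factor is obtained by normalizing the first column, hence depends
continuously on the matrix.
-/

open Subgroup
open scoped MatrixGroups

theorem isSolvable_equiv_group {α β : Type*} [Group β] [Group.IsSolvable β] (e : α ≃ β) :
    @Group.IsSolvable α e.group :=
  letI := e.group
  Group.isSolvable_of_isSolvable_injective (f := e.mulEquiv.toMonoidHom) e.injective

section ExactFactorization

variable {G : Type*} [Group G] {H K : Subgroup G} (hHK : IsComplement' H K)

/-- The operation `a ∘ b = a₁ * b * a₂` attached to an exact factorization `G = H * K`, where
`a = a₁ * a₂` with `a₁ ∈ H` and `a₂ ∈ K`. -/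
noncomputable def factorizationMul (a b : G) : G :=
  (hHK.equiv a).1 * b * (hHK.equiv a).2

/-- The bijection `a₁ * a₂ ↦ (a₁, a₂⁻¹)` attached to an exact factorization `G = H * K`. The
inverse undoes the order reversal of the second factors in `factorizationMul`, which thus
corresponds to the componentwise multiplication of `H × K`. -/
noncomputable def factorizationEquiv : G ≃ H × K :=
  hHK.equiv.trans ((Equiv.refl H).prodCongr (Equiv.inv K))

/-- The group structure on `G` with multiplication `factorizationMul`, transported from `H × K`. -/
noncomputable abbrev factorizationGroup : Group G :=
  (factorizationEquiv hHK).group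

theorem equiv_mul_of_mem {x y : G} (hx : x ∈ H) (hy : y ∈ K) :
    hHK.equiv (x * y) = (⟨x, hx⟩, ⟨y, hy⟩) :=
  hHK.equiv.apply_symm_apply (⟨x, hx⟩, ⟨y, hy⟩)

theorem equiv_fst_eq_of_inv_mul_mem {a x : G} (hx : x ∈ H) (hxa : x⁻¹ * a ∈ K) :
    ((hHK.equiv a).1 : G) = x := by
  simpa only [mul_inv_cancel_left] using
    congrArg (fun p => (p.1 : G)) (equiv_mul_of_mem hHK hx hxa)

theorem factorizationMul_mul_of_mem {x y : G} (hx : x ∈ H) (hy : y ∈ K) (b : G) :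
    factorizationMul hHK (x * y) b = x * b * y := by
  rw [factorizationMul, equiv_mul_of_mem hHK hx hy]

theorem factorizationMul_mul (a b c : G) :
    factorizationMul hHK a (b * c) =
      factorizationMul hHK a b * a⁻¹ * factorizationMul hHK a c := by
  simp only [factorizationMul, IsComplement.equiv_snd_eq_inv_mul]
  group

theorem factorizationGroup_mul : (factorizationGroup hHK).mul = factorizationMul hHK := by
  funext a b
  calc ((hHK.equiv a).1 * (hHK.equiv b).1 : G) *
        (((hHK.equiv a).2 : G)⁻¹ * ((hHK.equiv b).2 : G)⁻¹)⁻¹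
    _ = (hHK.equiv a).1 * ((hHK.equiv b).1 * (hHK.equiv b).2) * (hHK.equiv a).2 := by group
    _ = factorizationMul hHK a b := by rw [hHK.equiv_fst_mul_equiv_snd, factorizationMul]

theorem isSolvable_factorizationGroup [Group.IsSolvable H] [Group.IsSolvable K] :
    @Group.IsSolvable G (factorizationGroup hHK) :=
  isSolvable_equiv_group (factorizationEquiv hHK)

theorem continuous_factorizationMul [TopologicalSpace G] [IsTopologicalGroup G]
    (hfst : Continuous fun a => ((hHK.equiv a).1 : G)) :
    Continuous fun p : G × G => factorizationMul hHK p.1 p.2 := by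
  simp only [factorizationMul, IsComplement.equiv_snd_eq_inv_mul]
  have hfst' := hfst.comp (continuous_fst (X := G) (Y := G))
  exact (hfst'.mul continuous_snd).mul (hfst'.inv.mul continuous_fst)

end ExactFactorization

theorem diag_mul_sub_antidiag_mul_eq_one {R : Type*} [CommRing R] (A : SL(2, R)) :
    A 0 0 * A 1 1 - A 0 1 * A 1 0 = 1 := by
  rw [← det_fin_two, A.det_coe]

section SpecialOrthogonal

/-- The special orthogonal group as a subgroup of the special linear group. -/
def specialOrthogonalSubgroup (n R : Type*) [Fintype n] [DecidableEq n] [CommRing R] :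
    Subgroup (SpecialLinearGroup n R) where
  toSubmonoid := (orthogonalGroup n R).comap SpecialLinearGroup.coeMonoidHom
  inv_mem' {A} hA := by
    have hinv : A⁻¹ = A.transpose :=
      inv_eq_of_mul_eq_one_right (Subtype.ext ((mem_orthogonalGroup_iff n R).1 hA))
    rw [hinv]
    exact (mem_orthogonalGroup_iff n R).2 ((mem_orthogonalGroup_iff' n R).1 hA)

theorem mem_specialOrthogonalSubgroup_iff {n R : Type*} [Fintype n] [DecidableEq n] [CommRing R]
    {A : SpecialLinearGroup n R} :
    A ∈ specialOrthogonalSubgroup n R ↔ (A : Matrix n n R) * (A : Matrix n n R)ᵀ = 1 :=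
  mem_orthogonalGroup_iff n R

variable {R : Type*} [CommRing R]

theorem mem_specialOrthogonalSubgroup_fin_two_iff {A : SL(2, R)} :
    A ∈ specialOrthogonalSubgroup (Fin 2) R ↔ A 1 1 = A 0 0 ∧ A 0 1 = -A 1 0 := by
  have hdet := diag_mul_sub_antidiag_mul_eq_one A
  have hmem : A ∈ specialOrthogonalSubgroup (Fin 2) R ↔
      (A : Matrix (Fin 2) (Fin 2) R) ∈ specialOrthogonalGroup (Fin 2) R :=
    (and_iff_left A.det_coe).symm
  rw [hmem, mem_specialOrthogonalGroup_fin_two_iff]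
  grind

instance isMulCommutative_specialOrthogonalSubgroup_fin_two :
    IsMulCommutative (specialOrthogonalSubgroup (Fin 2) R) :=
  .of_setLike_mul_comm fun A hA B hB => by
    rw [mem_specialOrthogonalSubgroup_fin_two_iff] at hA hB
    ext i j
    fin_cases i <;> fin_cases j <;>
      simp only [Fin.zero_eta, Fin.mk_one, Matrix.SpecialLinearGroup.coe_mul, mul_apply,
        Fin.sum_univ_two, hA, hB] <;>
      ring

instance isSolvable_specialOrthogonalSubgroup_fin_two :
    Group.IsSolvable (specialOrthogonalSubgroup (Fin 2) R) :=
  Group.isSolvable_of_comm mul_comm'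

end SpecialOrthogonal

section UpperTriangular

section CommRing

variable (R : Type*) [CommRing R]

/-- The upper triangular matrices in `SL₂(R)`. -/
def upperTriangularSubgroup : Subgroup SL(2, R) where
  carrier := {A | A 1 0 = 0}
  one_mem' := by simp
  mul_mem' {A B} hA hB := by simp_all [mul_apply]
  inv_mem' {A} hA := by simp_all [adjugate_fin_two]

/-- The upper left entry, which is multiplicative on upper triangular matrices. -/
def upperLeftHom : upperTriangularSubgroup R →* R where
  toFun A := A.1 0 0
  map_one' := by simp
  map_mul' A B := by
    have hB : B.1 1 0 = 0 := B.2
    simp [mul_apply, hB]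

variable {R}

theorem diag_mul_eq_one_of_mem_upperTriangularSubgroup {A : SL(2, R)}
    (hA : A ∈ upperTriangularSubgroup R) : A 0 0 * A 1 1 = 1 := by
  have hA : A 1 0 = 0 := hA
  simpa [hA] using diag_mul_sub_antidiag_mul_eq_one A

theorem mem_ker_upperLeftHom_iff {A : upperTriangularSubgroup R} :
    A ∈ (upperLeftHom R).toHomUnits.ker ↔ A.1 0 0 = 1 := by
  rw [MonoidHom.mem_ker, Units.ext_iff]
  rfl

theorem isMulCommutative_ker_upperLeftHom :
    IsMulCommutative (upperLeftHom R).toHomUnits.ker :=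
  .of_setLike_mul_comm fun A hA B hB => by
    rw [mem_ker_upperLeftHom_iff] at hA hB
    have hA' : A.1 1 1 = 1 := by
      simpa [hA] using diag_mul_eq_one_of_mem_upperTriangularSubgroup A.2
    have hB' : B.1 1 1 = 1 := by
      simpa [hB] using diag_mul_eq_one_of_mem_upperTriangularSubgroup B.2
    have hA₀ : A.1 1 0 = 0 := A.2
    have hB₀ : B.1 1 0 = 0 := B.2
    ext i j
    fin_cases i <;> fin_cases j <;> simp [mul_apply, *, add_comm]

instance isSolvable_upperTriangularSubgroup : Group.IsSolvable (upperTriangularSubgroup R) :=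
  have := isMulCommutative_ker_upperLeftHom (R := R)
  have : Group.IsSolvable (upperLeftHom R).toHomUnits.ker := Group.isSolvable_of_comm mul_comm'
  Group.isSolvable_of_ker_le_range (upperLeftHom R).toHomUnits.ker.subtype
    (upperLeftHom R).toHomUnits (by simp)

end CommRing

section Ordered

variable (R : Type*) [CommRing R] [LinearOrder R] [IsStrictOrderedRing R]

/-- The subgroup `AN` of `SL₂(R)`: upper triangular matrices with positive diagonal. Only the upper
left entry is required to be positive, since the lower right one is its inverse. -/
def posUpperTriangularSubgroup : Subgroup SL(2, R) where
  carrier := {A | A 1 0 = 0 ∧ 0 < A 0 0}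
  one_mem' := by simp
  mul_mem' {A B} hA hB := by simp_all [mul_apply]
  inv_mem' {A} hA := by
    have hdiag : A 0 0 * A 1 1 = 1 := diag_mul_eq_one_of_mem_upperTriangularSubgroup hA.1
    have hpos : 0 < A 1 1 := pos_of_mul_pos_right (by simp [hdiag]) hA.2.le
    simpa [adjugate_fin_two, hpos] using hA.1

variable {R}

theorem posUpperTriangularSubgroup_le :
    posUpperTriangularSubgroup R ≤ upperTriangularSubgroup R :=
  fun _ hA => hA.1

instance isSolvable_posUpperTriangularSubgroup : Group.IsSolvable (posUpperTriangularSubgroup R) :=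
  Group.isSolvable_of_isSolvable_injective (inclusion_injective posUpperTriangularSubgroup_le)

theorem disjoint_specialOrthogonalSubgroup_posUpperTriangularSubgroup :
    Disjoint (specialOrthogonalSubgroup (Fin 2) R) (posUpperTriangularSubgroup R) := by
  rw [disjoint_def]
  rintro A hSO ⟨h10, h00⟩
  obtain ⟨h11, h01⟩ := mem_specialOrthogonalSubgroup_fin_two_iff.1 hSO
  have hdiag : A 0 0 * A 0 0 = 1 := by
    simpa [h11] using diag_mul_eq_one_of_mem_upperTriangularSubgroup h10
  have hone : A 0 0 = 1 := (mul_self_eq_one_iff.1 hdiag).resolve_right (by linarith)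
  ext i j
  fin_cases i <;> fin_cases j <;> simp [*]

end Ordered

end UpperTriangular

section Iwasawa

/-- The Euclidean norm of the first column. -/
noncomputable def firstColNorm (A : SL(2, ℝ)) : ℝ :=
  √(A 0 0 ^ 2 + A 1 0 ^ 2)

theorem firstColNorm_pos (A : SL(2, ℝ)) : 0 < firstColNorm A := by
  refine Real.sqrt_pos.2 (lt_of_le_of_ne (by positivity) fun h => ?_)
  have h00 : A 0 0 = 0 := by nlinarith
  have h10 : A 1 0 = 0 := by nlinarith
  simpa [h00, h10] using diag_mul_sub_antidiag_mul_eq_one A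

theorem firstColNorm_sq (A : SL(2, ℝ)) : firstColNorm A ^ 2 = A 0 0 ^ 2 + A 1 0 ^ 2 :=
  Real.sq_sqrt (by positivity)

/-- The `SO(2)` component of the Iwasawa decomposition: the rotation whose first column is the
normalized first column of the given matrix. -/
noncomputable def iwasawaRotation (A : SL(2, ℝ)) : SL(2, ℝ) :=
  ⟨(firstColNorm A)⁻¹ • !![A 0 0, -A 1 0; A 1 0, A 0 0], by
    have := firstColNorm_pos A
    have := firstColNorm_sq A
    rw [det_smul, det_fin_two_of, Fintype.card_fin]
    field_simp
    linarith⟩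

theorem iwasawaRotation_mem (A : SL(2, ℝ)) :
    iwasawaRotation A ∈ specialOrthogonalSubgroup (Fin 2) ℝ :=
  mem_specialOrthogonalSubgroup_fin_two_iff.2 (by simp [iwasawaRotation])

theorem coe_iwasawaRotation_inv (A : SL(2, ℝ)) :
    (↑(iwasawaRotation A)⁻¹ : Matrix (Fin 2) (Fin 2) ℝ) =
      (firstColNorm A)⁻¹ • !![A 0 0, A 1 0; -A 1 0, A 0 0] := by
  rw [Matrix.SpecialLinearGroup.coe_inv, adjugate_fin_two]
  simp [iwasawaRotation]

theorem iwasawaRotation_inv_mul_mem (A : SL(2, ℝ)) :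
    (iwasawaRotation A)⁻¹ * A ∈ posUpperTriangularSubgroup ℝ := by
  have hpos := firstColNorm_pos A
  have h10 : (↑((iwasawaRotation A)⁻¹ * A) : Matrix (Fin 2) (Fin 2) ℝ) 1 0 = 0 := by
    rw [Matrix.SpecialLinearGroup.coe_mul, coe_iwasawaRotation_inv, smul_mul, Matrix.smul_apply]
    simp [mul_apply, mul_comm]
  have h00 : (↑((iwasawaRotation A)⁻¹ * A) : Matrix (Fin 2) (Fin 2) ℝ) 0 0 = firstColNorm A := by
    rw [Matrix.SpecialLinearGroup.coe_mul, coe_iwasawaRotation_inv, smul_mul, Matrix.smul_apply,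
      smul_eq_mul, inv_mul_eq_iff_eq_mul₀ hpos.ne', ← sq, firstColNorm_sq]
    simp [mul_apply, sq]
  exact ⟨h10, h00 ▸ hpos⟩

theorem isComplement'_specialOrthogonalSubgroup_posUpperTriangularSubgroup :
    IsComplement' (specialOrthogonalSubgroup (Fin 2) ℝ) (posUpperTriangularSubgroup ℝ) :=
  isComplement'_of_disjoint_and_mul_eq_univ
    disjoint_specialOrthogonalSubgroup_posUpperTriangularSubgroup <|
    Set.eq_univ_of_forall fun A => Set.mem_mul.2
      ⟨_, iwasawaRotation_mem A, _, iwasawaRotation_inv_mul_mem A, mul_inv_cancel_left _ _⟩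

theorem equiv_fst_eq_iwasawaRotation (A : SL(2, ℝ)) :
    ((isComplement'_specialOrthogonalSubgroup_posUpperTriangularSubgroup.equiv A).1 : SL(2, ℝ)) =
      iwasawaRotation A :=
  equiv_fst_eq_of_inv_mul_mem _ (iwasawaRotation_mem A) (iwasawaRotation_inv_mul_mem A)

theorem continuous_iwasawaRotation : Continuous iwasawaRotation := by
  have hentry (i j : Fin 2) : Continuous fun A : SL(2, ℝ) => A i j :=
    continuous_induced_dom.matrix_elem i j
  have hnorm : Continuous firstColNorm := by unfold firstColNorm; fun_prop
  have hinv := hnorm.inv₀ fun A => (firstColNorm_pos A).ne'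
  refine continuous_induced_rng.2 (hinv.smul (continuous_matrix fun i j => ?_))
  fin_cases i <;> fin_cases j
  exacts [hentry 0 0, (hentry 1 0).neg, hentry 1 0, hentry 0 0]

end Iwasawa

/-- Let `SL₂(ℝ)` be the group of `2 × 2` real matrices of determinant `1`
under matrix multiplication `·`.  There is a group operation `∘` (`circ`) on `SL₂(ℝ)` such
that `(SL₂(ℝ), ·, ∘)` is a skew brace and `(SL₂(ℝ), ∘)` is solvable; moreover `∘` is
continuous and is induced by the exact Iwasawa factorization `SL₂(ℝ) = K · AN`
(`K = SO(2)` the orthogonal elements, `AN` the upper triangular matrices of determinant `1`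
with positive diagonal) via the rule `a ∘ b = a₁ · b · a₂` whenever `a = a₁ a₂` with
`a₁ ∈ K`, `a₂ ∈ AN`. -/
theorem skew_brace_on_SL2R :
    ∃ circ : Matrix.SpecialLinearGroup (Fin 2) ℝ → Matrix.SpecialLinearGroup (Fin 2) ℝ →
        Matrix.SpecialLinearGroup (Fin 2) ℝ,
      (∃ Gc : Group (Matrix.SpecialLinearGroup (Fin 2) ℝ), Gc.mul = circ ∧
        @IsSolvable (Matrix.SpecialLinearGroup (Fin 2) ℝ) Gc) ∧
      (∀ a b c : Matrix.SpecialLinearGroup (Fin 2) ℝ,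
        circ a (b * c) = circ a b * a⁻¹ * circ a c) ∧
      Continuous (fun p : Matrix.SpecialLinearGroup (Fin 2) ℝ ×
        Matrix.SpecialLinearGroup (Fin 2) ℝ => circ p.1 p.2) ∧
      (∀ a b a₁ a₂ : Matrix.SpecialLinearGroup (Fin 2) ℝ,
        (a₁ : Matrix (Fin 2) (Fin 2) ℝ) * (a₁ : Matrix (Fin 2) (Fin 2) ℝ)ᵀ = 1 →
        ((a₂ : Matrix (Fin 2) (Fin 2) ℝ) 1 0 = 0 ∧
          0 < (a₂ : Matrix (Fin 2) (Fin 2) ℝ) 0 0) →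
        a = a₁ * a₂ → circ a b = a₁ * b * a₂) := by
  have hKAN := isComplement'_specialOrthogonalSubgroup_posUpperTriangularSubgroup
  have : IsTopologicalGroup SL(2, ℝ) := SpecialLinearGroup.topologicalGroup
  refine ⟨factorizationMul hKAN,
    ⟨factorizationGroup hKAN, factorizationGroup_mul hKAN, isSolvable_factorizationGroup hKAN⟩,
    factorizationMul_mul hKAN, continuous_factorizationMul hKAN ?_, ?_⟩
  · simpa only [equiv_fst_eq_iwasawaRotation] using continuous_iwasawaRotation
  · rintro _ b a₁ a₂ ha₁ ha₂ rfl
    exact factorizationMul_mul_of_mem hKAN (mem_specialOrthogonalSubgroup_iff.2 ha₁) ha₂ b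
end

section
/- Let H₃ be the three-dimensional Heisenberg group, i.e. ℝ³ with the multiplication (x, y, z) · (x', y', z') = (x + x', y + y', z + z' + x y'). Then there exists a group operation ∘ on ℝ³ such that the triple (H₃, ·, ∘) is a skew brace and the group (ℝ³, ∘) is abelian; moreover the group (H₃, ·) is nilpotent and non-abelian. -/
/-!
Let `∘` be coordinatewise addition. Then `a + b = a · λₓ(b)`, where `x` is the first coordinate
of `a` and `λₓ(b) = (b₁, b₂, b₃ - x b₂)` is a shear. Because `x b₂` is additive in `b₂`, each `λₓ`
is an endomorphism of the Heisenberg group, and this is the skew brace identity: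
`a + b · c = a · λₓ(b) · λₓ(c) = (a + b) · a⁻¹ · (a + c)`. Nilpotency holds because the kernel of
the projection to the first two coordinates is central and the quotient is abelian. Only
biadditivity of the product matters, so it may be replaced by any biadditive map.
-/

/-- The Heisenberg group of a biadditive map `β : A × B → C`: triples with the product
`(x, y, z) * (x', y', z') = (x + x', y + y', z + z' + β x y')`. The notation `+` is kept for
coordinatewise addition, the second operation of the skew brace. -/
structure Heisenberg {A B C : Type*} [AddCommGroup A] [AddCommGroup B] [AddCommGroup C]
    (β : A →+ B →+ C) where
  x : A
  y : B
  z : C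

namespace Heisenberg

variable {A B C : Type*} [AddCommGroup A] [AddCommGroup B] [AddCommGroup C] {β : A →+ B →+ C}

/-- The underlying triple. Addition is pulled back from `A × B × C` along this bijection, and the
Heisenberg product is pushed forward to `A × B × C` along it. -/
def equivProd (β : A →+ B →+ C) : Heisenberg β ≃ A × B × C where
  toFun a := (a.x, a.y, a.z)
  invFun p := ⟨p.1, p.2.1, p.2.2⟩

instance : AddCommGroup (Heisenberg β) :=
  (equivProd β).addCommGroup

instance : Mul (Heisenberg β) :=
  ⟨fun a b => ⟨a.x + b.x, a.y + b.y, a.z + b.z + β a.x b.y⟩⟩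

instance : One (Heisenberg β) :=
  ⟨⟨0, 0, 0⟩⟩

instance : Inv (Heisenberg β) :=
  ⟨fun a => ⟨-a.x, -a.y, -a.z + β a.x a.y⟩⟩

theorem add_def (a b : Heisenberg β) : a + b = ⟨a.x + b.x, a.y + b.y, a.z + b.z⟩ :=
  rfl

theorem mul_def (a b : Heisenberg β) :
    a * b = ⟨a.x + b.x, a.y + b.y, a.z + b.z + β a.x b.y⟩ :=
  rfl

theorem one_def : (1 : Heisenberg β) = ⟨0, 0, 0⟩ :=
  rfl

theorem inv_def (a : Heisenberg β) : a⁻¹ = ⟨-a.x, -a.y, -a.z + β a.x a.y⟩ :=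
  rfl

instance : Group (Heisenberg β) :=
  Group.ofLeftAxioms
    (fun a b c => by
      simp only [mul_def, map_add, AddMonoidHom.add_apply, mk.injEq]
      refine ⟨?_, ?_, ?_⟩ <;> abel)
    (fun a => by simp [mul_def, one_def])
    (fun a => by simp [mul_def, one_def, inv_def])

theorem commute_iff {a b : Heisenberg β} : Commute a b ↔ β a.x b.y = β b.x a.y := by
  simp only [commute_iff_eq, mul_def, mk.injEq, add_comm b.x, add_comm b.y, add_comm b.z,
    add_right_inj, true_and]

theorem exists_not_commute (hβ : β ≠ 0) : ∃ a b : Heisenberg β, ¬Commute a b := by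
  obtain ⟨x, hx⟩ := DFunLike.ne_iff.mp hβ
  obtain ⟨y, hxy⟩ := DFunLike.ne_iff.mp hx
  exact ⟨⟨x, 0, 0⟩, ⟨0, y, 0⟩, fun h => hxy (by simpa using commute_iff.mp h)⟩

/-- The projection `(x, y, z) ↦ (x, y)` onto the abelian group `A × B`, written multiplicatively. -/
def proj (β : A →+ B →+ C) : Heisenberg β →* Multiplicative (A × B) where
  toFun a := .ofAdd (a.x, a.y)
  map_one' := rfl
  map_mul' _ _ := rfl

theorem ker_proj_le_center : (proj β).ker ≤ Subgroup.center (Heisenberg β) := by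
  intro a ha
  obtain ⟨hx, hy⟩ : a.x = 0 ∧ a.y = 0 := Prod.mk_eq_zero.mp ha
  exact Subgroup.mem_center_iff.mpr fun b => (commute_iff.mpr (by simp [hx, hy])).eq

instance : Group.IsNilpotent (Heisenberg β) :=
  Subgroup.isNilpotent_of_ker_le_center (proj β) ker_proj_le_center

/-- The endomorphism `(u, v, w) ↦ (u, v, w - β x v)`. It is the map `b ↦ a⁻¹ * (a + b)`, usually
called `λ_a` in the theory of skew braces, for every `a` with first coordinate `x`. -/
def shear (β : A →+ B →+ C) (x : A) : Heisenberg β →* Heisenberg β where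
  toFun b := ⟨b.x, b.y, b.z - β x b.y⟩
  map_one' := by simp [one_def]
  map_mul' b c := by
    simp only [mul_def, map_add, mk.injEq, true_and]
    abel

theorem mul_shear (a b : Heisenberg β) : a * shear β a.x b = a + b := by
  simp [shear, mul_def, add_def, add_assoc]

theorem add_mul_eq_add_mul_inv_mul_add (a b c : Heisenberg β) :
    a + b * c = (a + b) * a⁻¹ * (a + c) := by
  simp only [← mul_shear, map_mul, mul_assoc, inv_mul_cancel_left]

end Heisenberg

open Heisenberg in
theorem heisenberg_skew_brace_general {A B C : Type*} [AddCommGroup A] [AddCommGroup B]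
    [AddCommGroup C] (β : A →+ B →+ C) (hβ : β ≠ 0) :
    ∃ Gd : Group (A × B × C),
      (∀ p q : A × B × C, Gd.mul p q =
        (p.1 + q.1, p.2.1 + q.2.1, p.2.2 + q.2.2 + β p.1 q.2.1)) ∧
      (∃ Gc : Group (A × B × C),
        (∀ a b c : A × B × C, Gc.mul a (Gd.mul b c) =
          Gd.mul (Gd.mul (Gc.mul a b) (Gd.inv a)) (Gc.mul a c)) ∧
        (∀ a b : A × B × C, Gc.mul a b = Gc.mul b a)) ∧
      @Group.IsNilpotent (A × B × C) Gd ∧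
      (∃ a b : A × B × C, Gd.mul a b ≠ Gd.mul b a) := by
  let e := (equivProd β).symm
  let Gd : Group (A × B × C) := e.group
  have nilpotent : Group.IsNilpotent (A × B × C) := Group.nilpotent_of_mulEquiv e.mulEquiv.symm
  obtain ⟨a, b, hab⟩ := exists_not_commute hβ
  refine ⟨Gd, fun _ _ => rfl, ⟨(inferInstance : Group (Multiplicative (A × B × C))), ?_, ?_⟩,
    nilpotent, e.symm a, e.symm b, fun h => hab (e.symm.injective h)⟩
  · exact fun p q r => congrArg e.symm (add_mul_eq_add_mul_inv_mul_add (e p) (e q) (e r))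
  · exact add_comm (G := A × B × C)

/-- Let `H₃` be the three-dimensional Heisenberg group, i.e. `ℝ³` with the
multiplication `(x, y, z) · (x', y', z') = (x + x', y + y', z + z' + x y')` (the group
structure `Gd`).  Then there is a group operation `∘` (`Gc`) on `ℝ³` such that `(H₃, ·, ∘)`
is a skew brace and `(ℝ³, ∘)` is abelian; moreover `(H₃, ·)` is nilpotent and non-abelian. -/
theorem heisenberg_skew_brace :
    ∃ Gd : Group (ℝ × ℝ × ℝ),
      (∀ p q : ℝ × ℝ × ℝ, Gd.mul p q =
        (p.1 + q.1, p.2.1 + q.2.1, p.2.2 + q.2.2 + p.1 * q.2.1)) ∧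
      (∃ Gc : Group (ℝ × ℝ × ℝ),
        (∀ a b c : ℝ × ℝ × ℝ, Gc.mul a (Gd.mul b c) =
          Gd.mul (Gd.mul (Gc.mul a b) (Gd.inv a)) (Gc.mul a c)) ∧
        (∀ a b : ℝ × ℝ × ℝ, Gc.mul a b = Gc.mul b a)) ∧
      @Group.IsNilpotent (ℝ × ℝ × ℝ) Gd ∧
      (∃ a b : ℝ × ℝ × ℝ, Gd.mul a b ≠ Gd.mul b a) :=
  heisenberg_skew_brace_general (AddMonoidHom.mul (R := ℝ)) fun h => one_ne_zero (α := ℝ) <| by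
    simpa using DFunLike.congr_fun (DFunLike.congr_fun h 1) 1
end
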